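/- Let B be a finite-dimensional C*-algebra over ℂ and let J be a two-sided ideal of B. Then J has a multiplicative unit e (an element e ∈ J with e*y = y*e = y for all y ∈ J), this e is a self-adjoint idempotent lying in the center of B, and the map b ↦ (b*e, b + J) is a *-algebra isomorphism from B onto the product C*-algebra J × (B/J). -/

import Mathlib

/-!
In a `*`-ring where `star x * x = 0` forces `x = 0`, a self-adjoint nilpotent element vanishes.
If `x` lies in a nil left ideal then so does `star x * x`, which is therefore `0`, and hence
`x = 0`. So such a ring, when Artinian, is semisimple. In a semisimple ring every left ideal and
every right ideal is generated by an idempotent; a two-sided ideal `J` thus has a right unit `e`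
and a left unit `f`, and `f = f * e = e`. This unit is central, hence normal, and properness gives
`e = star e * e`, so `e` is self-adjoint.
-/

/-- The star operation of `R` is a *proper involution*: `star x * x` vanishes only for `x = 0`.
The C*-identity `‖star x * x‖ = ‖x‖ ^ 2` gives it at once. -/
class HasProperStar (R : Type*) [Mul R] [Zero R] [Star R] : Prop where
  eq_zero_of_star_mul_self : ∀ {x : R}, star x * x = 0 → x = 0

instance hasProperStar_of_cStarRing {E : Type*} [NonUnitalNormedRing E]
    [StarRing E] [CStarRing E] : HasProperStar E where
  eq_zero_of_star_mul_self := (CStarRing.star_mul_self_eq_zero_iff _).mp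

namespace HasProperStar

theorem eq_zero_of_isSelfAdjoint_of_isNilpotent {R : Type*} [MonoidWithZero R] [StarMul R]
    [HasProperStar R] {a : R} (ha : IsSelfAdjoint a) (hnil : IsNilpotent a) : a = 0 := by
  have eq_zero_of_two_pow (k : ℕ) (hk : a ^ 2 ^ k = 0) : a = 0 := by
    induction k with
    | zero => simpa using hk
    | succ k ih =>
      refine ih (eq_zero_of_star_mul_self ?_)
      rwa [(ha.pow _).star_eq, ← sq, ← pow_mul, ← pow_succ]
  obtain ⟨n, hn⟩ := hnil
  exact eq_zero_of_two_pow n (pow_eq_zero_of_le Nat.lt_two_pow_self.le hn)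

theorem ideal_eq_bot_of_forall_isNilpotent {R : Type*} [Semiring R] [StarMul R] [HasProperStar R]
    {I : Ideal R} (hI : ∀ x ∈ I, IsNilpotent x) : I = ⊥ := by
  refine (Submodule.eq_bot_iff I).mpr fun x hx => eq_zero_of_star_mul_self ?_
  exact eq_zero_of_isSelfAdjoint_of_isNilpotent (.star_mul_self x)
    (hI _ (I.mul_mem_left (star x) hx))

theorem isSemisimpleRing {R : Type*} [Ring R] [StarMul R] [HasProperStar R] [IsArtinianRing R] :
    IsSemisimpleRing R := by
  refine IsArtinianRing.isSemisimpleRing_iff_jacobson.mpr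
    (ideal_eq_bot_of_forall_isNilpotent fun x hx => ?_)
  obtain ⟨n, hn⟩ := IsSemiprimaryRing.isNilpotent (R := R)
  have hx_pow : x ^ n ∈ Ring.jacobson R ^ n := Ideal.pow_mem_pow hx n
  exact ⟨n, by simpa [hn] using hx_pow⟩

theorem isSelfAdjoint_of_isIdempotentElem_of_isStarNormal {R : Type*} [NonUnitalRing R]
    [StarRing R] [HasProperStar R] {e : R} (he : IsIdempotentElem e) [IsStarNormal e] :
    IsSelfAdjoint e := by
  have h_sq : star e * e * (star e * e) = star e * e := by
    rw [(star_comm_self (x := e)).symm.mul_mul_mul_comm, he.star.eq, he.eq]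
  have h_zero : star (e - star e * e) * (e - star e * e) = 0 := by
    rw [star_sub, (IsSelfAdjoint.star_mul_self e).star_eq, sub_mul, mul_sub, mul_sub, h_sq,
      ← mul_assoc (star e), he.star.eq, mul_assoc (star e), he.eq]
    abel
  rw [sub_eq_zero.mp (eq_zero_of_star_mul_self h_zero)]
  exact .star_mul_self e

end HasProperStar

/-- `e` is a multiplicative unit of the two-sided ideal `J`. The ambient ring `R` need not be
unital, and if it is, `e` is in general not its unit. -/
structure IsIdealUnit {R : Type*} [NonUnitalNonAssocRing R] (J : TwoSidedIdeal R) (e : R) :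
    Prop where
  mem : e ∈ J
  unit_mul : ∀ y ∈ J, e * y = y
  mul_unit : ∀ y ∈ J, y * e = y

namespace IsIdealUnit

section NonAssoc

variable {R : Type*} [NonUnitalNonAssocRing R] {J : TwoSidedIdeal R} {e : R}

theorem isIdempotentElem (h : IsIdealUnit J e) : IsIdempotentElem e :=
  h.unit_mul e h.mem

theorem bijective_mul_unit_prodMk_quotient (h : IsIdealUnit J e) :
    Function.Bijective fun b : R =>
      ((⟨b * e, J.mul_mem_left b e h.mem⟩ : J), (b : J.ringCon.Quotient)) := by
  constructor
  · intro a b hab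
    obtain ⟨h_mul, h_quot⟩ : a * e = b * e ∧ (a : J.ringCon.Quotient) = b := by
      simpa only [Prod.mk.injEq, Subtype.mk.injEq] using hab
    have h_sub : a - b ∈ J := by rwa [RingCon.eq, J.rel_iff] at h_quot
    rw [← sub_eq_zero, ← h.mul_unit _ h_sub, sub_mul, h_mul, sub_self]
  · rintro ⟨⟨y, hy⟩, q⟩
    obtain ⟨c, rfl⟩ := Quot.exists_rep q
    have hce : c * e ∈ J := J.mul_mem_left c e h.mem
    refine ⟨y + (c - c * e), Prod.ext (Subtype.ext ?_) (J.ringCon.eq.mpr ?_)⟩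
    · change (y + (c - c * e)) * e = y
      rw [add_mul, sub_mul, h.mul_unit y hy, h.mul_unit _ hce, sub_self, add_zero]
    · rw [J.rel_iff, show y + (c - c * e) - c = y - c * e by abel]
      exact J.sub_mem hy hce

end NonAssoc

section Assoc

variable {R : Type*} [NonUnitalRing R] {J : TwoSidedIdeal R} {e : R}

theorem commute (h : IsIdealUnit J e) (b : R) : Commute e b :=
  calc
    e * b = e * b * e := (h.mul_unit _ (J.mul_mem_right e b h.mem)).symm
    _ = e * (b * e) := mul_assoc e b e
    _ = b * e := h.unit_mul _ (J.mul_mem_left b e h.mem)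

theorem mul_mul_unit (h : IsIdealUnit J e) (a b : R) : a * b * e = a * e * (b * e) := by
  rw [(h.commute b).mul_mul_mul_comm, h.isIdempotentElem.eq]

variable [StarRing R] [HasProperStar R]

theorem isSelfAdjoint (h : IsIdealUnit J e) : IsSelfAdjoint e :=
  have : IsStarNormal e := ⟨(h.commute (star e)).symm⟩
  HasProperStar.isSelfAdjoint_of_isIdempotentElem_of_isStarNormal h.isIdempotentElem

theorem star_mem (h : IsIdealUnit J e) {y : R} (hy : y ∈ J) : star y ∈ J := by
  rw [← h.unit_mul y hy, star_mul, h.isSelfAdjoint.star_eq]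
  exact J.mul_mem_left (star y) e h.mem

theorem star_mul_unit (h : IsIdealUnit J e) (b : R) : star b * e = star (b * e) := by
  rw [star_mul, h.isSelfAdjoint.star_eq, h.commute]

end Assoc

end IsIdealUnit

section Semisimple

variable {R : Type*} [Ring R] [IsSemisimpleRing R]

theorem exists_mem_forall_mul_eq_self (I : Ideal R) : ∃ e ∈ I, ∀ y ∈ I, y * e = y := by
  obtain ⟨e, he, rfl⟩ := IsSemisimpleRing.ideal_eq_span_idempotent I
  refine ⟨e, Ideal.mem_span_singleton_self e, fun y hy => ?_⟩
  obtain ⟨a, rfl⟩ := Ideal.mem_span_singleton'.mp hy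
  rw [mul_assoc, he.eq]

theorem exists_isIdealUnit (J : TwoSidedIdeal R) : ∃ e, IsIdealUnit J e := by
  obtain ⟨e, he, mul_e⟩ := exists_mem_forall_mul_eq_self J.asIdeal
  obtain ⟨f, hf, f_mul⟩ : ∃ f ∈ J, ∀ y ∈ J, f * y = y := by
    obtain ⟨f, hf, mul_f⟩ := exists_mem_forall_mul_eq_self J.op.asIdeal
    refine ⟨f.unop, TwoSidedIdeal.mem_op_iff.mp hf, fun y hy => ?_⟩
    exact congrArg MulOpposite.unop (mul_f (.op y) (TwoSidedIdeal.mem_op_iff.mpr hy))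
  have h_eq : f = e := (mul_e f hf).symm.trans (f_mul e he)
  exact ⟨e, he, h_eq ▸ f_mul, mul_e⟩

end Semisimple

theorem ideal_of_finiteDimensional_is_unital_summand_general
    {R B : Type*} [Ring B] [StarRing B] [HasProperStar B] [IsArtinianRing B]
    [SMul R B] [IsScalarTower R B B] (J : TwoSidedIdeal B) :
    ∃ e : B, ∃ he : e ∈ J,
      (∀ y ∈ J, e * y = y ∧ y * e = y) ∧
      star e = e ∧
      e * e = e ∧
      (∀ b : B, e * b = b * e) ∧
      (∀ y ∈ J, star y ∈ J) ∧
      Function.Bijective (fun b : B =>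
        ((⟨b * e, J.mul_mem_left b e he⟩ : J), (b : J.ringCon.Quotient))) ∧
      (∀ a b : B, (a * b) * e = (a * e) * (b * e)) ∧
      (∀ b : B, star b * e = star (b * e)) ∧
      (∀ (c : R) (b : B), (c • b) * e = c • (b * e)) := by
  have : IsSemisimpleRing B := HasProperStar.isSemisimpleRing
  obtain ⟨e, h⟩ := exists_isIdealUnit J
  exact ⟨e, h.mem, fun y hy => ⟨h.unit_mul y hy, h.mul_unit y hy⟩, h.isSelfAdjoint.star_eq,
    h.isIdempotentElem.eq, fun b => (h.commute b).eq, fun _ hy => h.star_mem hy,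
    h.bijective_mul_unit_prodMk_quotient, h.mul_mul_unit, h.star_mul_unit,
    fun c b => smul_mul_assoc c b e⟩

/-- **Ideals of finite-dimensional C*-algebras are unital direct summands.**
Let `B` be a finite-dimensional C*-algebra and `J` a two-sided ideal of `B`.  Then `J` has
a multiplicative unit `e`, which is a self-adjoint central idempotent of `B`, the ideal `J`
is closed under `star`, and the map `b ↦ (b·e, b + J)` is a *-algebra isomorphism of `B`
onto the product `J × (B/J)`: it is bijective, and (the second component being the
canonical quotient ring homomorphism) it is multiplicative, `star`-preserving and linear in
the first component. -/
theorem ideal_of_finiteDimensional_is_unital_summand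
    {B : Type*} [NormedRing B] [StarRing B] [CStarRing B]
    [NormedAlgebra ℂ B] [StarModule ℂ B] [FiniteDimensional ℂ B]
    (J : TwoSidedIdeal B) :
    ∃ e : B, ∃ he : e ∈ J,
      (∀ y ∈ J, e * y = y ∧ y * e = y) ∧
      star e = e ∧
      e * e = e ∧
      (∀ b : B, e * b = b * e) ∧
      (∀ y ∈ J, star y ∈ J) ∧
      Function.Bijective (fun b : B =>
        ((⟨b * e, J.mul_mem_left b e he⟩ : J), (b : J.ringCon.Quotient))) ∧
      (∀ a b : B, (a * b) * e = (a * e) * (b * e)) ∧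
      (∀ b : B, star b * e = star (b * e)) ∧
      (∀ (c : ℂ) (b : B), (c • b) * e = c • (b * e)) := by
  have : IsArtinianRing B := .of_finite ℂ B
  exact ideal_of_finiteDimensional_is_unital_summand_general J
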